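/- Let n, m, k be positive integers, X̂ ∈ ℝ^{n×m}, and let p_U¹, p_U², p_V¹, p_V² ∈ [1,∞] with Hölder conjugates q_U¹, q_U², q_V¹, q_V². Define L = (1/n) sup{ ‖X̂U‖_{q_V¹×q_V²} : U ∈ ℝ^{m×k}, ‖U‖_{p_U¹×p_U²} ≤ 1 }. (i) For any V, Y ∈ (Δ_k)^{⊗n} with d_j := ‖X̂(j,:)‖_{q_U¹}·‖V(j,:) − Y(j,:)‖_{q_U²} > 0 for all j, the distribution q*_j = d_j/Σ_ȷ d_ȷ minimizes E[ ‖η_{V,Y}(q)‖_{q_U¹×q_U²}² ] = Σ_j (1/q_j) d_j² over probability vectors q with positive entries, with minimal value (Σ_j d_j)². (ii) If moreover p_V¹ ≥ 2, then (1/n²) sup{ E[ ‖X̂ᵀ(V−Y) − η_{V,Y}(q*(V,Y))‖_{q_U¹×q_U²}² ] : V, Y ∈ (Δ_k)^{⊗n}, all d_j(V,Y) > 0 } ≤ 8 n L² + (8/n²) ‖X̂‖_{1×q_U¹}². -/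

import Mathlib

/-!
The drawn estimate `X̂ᵀ (e_j e_jᵀ / q_j)(V − Y)` has rank one, so its mixed norm factors into vector
norms and the second moment is `∑ j, d_j² / q_j`, which Cauchy–Schwarz minimizes at `q ∝ d`. The
error is at most twice the squared norm of `X̂ᵀ(V − Y)` plus twice the second moment. By duality of
mixed norms, `U ↦ X̂ U` and its adjoint `D ↦ X̂ᵀ D` have the same operator norm `n L`; and since the
rows of `V − Y` have `ℓ₁`-norm at most two, `‖V − Y‖ ≤ 2 n^(1/p_V¹)`, where `n^(2/p_V¹) ≤ n` for
`p_V¹ ≥ 2`.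
-/

open scoped ENNReal BigOperators
open Matrix

/-- The `ℓ_p` norm of a finitely-indexed real vector, `p ∈ [1,∞]`. -/
noncomputable def lpNorm {ι : Type*} [Fintype ι] (p : ℝ≥0∞) (v : ι → ℝ) : ℝ :=
  if p = ∞ then ⨆ i, |v i| else (∑ i, |v i| ^ p.toReal) ^ (1 / p.toReal)

/-- The mixed norm `‖A‖_{p×q}`. -/
noncomputable def mixedNorm {ι κ : Type*} [Fintype ι] [Fintype κ]
    (p q : ℝ≥0∞) (A : Matrix ι κ ℝ) : ℝ :=
  lpNorm p (fun i => lpNorm q (A i))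

/-- The partial-sampling dual estimate `η_{V,Y}(q) = X̂ᵀ (e_j e_jᵀ / q_j)(V − Y)`
as a function of the drawn index `j`. -/
noncomputable def etaPart {n m k : ℕ} (Xh : Matrix (Fin n) (Fin m) ℝ)
    (V Y : Matrix (Fin n) (Fin k) ℝ) (q : Fin n → ℝ) (j : Fin n) :
    Matrix (Fin m) (Fin k) ℝ :=
  Matrix.of fun r c => Xh j r * (V j c - Y j c) / q j

section LpNorm

variable {ι E : Type*} [Fintype ι] [SeminormedAddCommGroup E] (p : ℝ≥0∞)

lemma lpNorm_abs (v : ι → ℝ) : lpNorm p (fun i => |v i|) = lpNorm p v := by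
  simp only [lpNorm, abs_abs]

lemma lpNorm_nonneg (v : ι → ℝ) : 0 ≤ lpNorm p v := by
  unfold lpNorm
  split_ifs
  · exact Real.iSup_nonneg fun i => abs_nonneg _
  · positivity

lemma lpNorm_mono {u v : ι → ℝ} (h : ∀ i, |u i| ≤ |v i|) : lpNorm p u ≤ lpNorm p v := by
  unfold lpNorm
  split_ifs
  · exact ciSup_mono (Finite.bddAbove_range _) h
  · exact Real.rpow_le_rpow (by positivity) (Finset.sum_le_sum fun i _ =>
      Real.rpow_le_rpow (abs_nonneg _) (h i) ENNReal.toReal_nonneg) (by positivity)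

lemma lpNorm_norm [Fact (1 ≤ p)] (f : ι → E) :
    lpNorm p (fun i => ‖f i‖) = ‖WithLp.toLp p f‖ := by
  by_cases hp : p = ∞
  · subst hp
    simp only [lpNorm, if_true, abs_norm, PiLp.norm_eq_ciSup]
  · have hp_pos : 0 < p.toReal := ENNReal.toReal_pos (zero_lt_one.trans_le Fact.out).ne' hp
    simp only [lpNorm, if_neg hp, abs_norm, PiLp.norm_eq_sum hp_pos]

lemma lpNorm_eq_norm [Fact (1 ≤ p)] (v : ι → ℝ) : lpNorm p v = ‖WithLp.toLp p v‖ := by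
  rw [← lpNorm_abs, ← lpNorm_norm]
  rfl

lemma lpNorm_smul [Fact (1 ≤ p)] (c : ℝ) (v : ι → ℝ) : lpNorm p (c • v) = |c| * lpNorm p v := by
  rw [lpNorm_eq_norm, lpNorm_eq_norm, WithLp.toLp_smul, norm_smul, Real.norm_eq_abs]

lemma lpNorm_one (v : ι → ℝ) : lpNorm 1 v = ∑ i, |v i| := by
  simp [lpNorm]

lemma lpNorm_top (v : ι → ℝ) : lpNorm ∞ v = ⨆ i, |v i| := if_pos rfl

lemma abs_apply_le_lpNorm [Fact (1 ≤ p)] (v : ι → ℝ) (i : ι) : |v i| ≤ lpNorm p v := by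
  rw [lpNorm_eq_norm]
  exact PiLp.norm_apply_le (WithLp.toLp p v) i

lemma lpNorm_le_lpNorm_one [Fact (1 ≤ p)] (v : ι → ℝ) : lpNorm p v ≤ lpNorm 1 v := by
  classical
  have sum_single : WithLp.toLp p v = ∑ i, PiLp.single p i (v i) := by
    simp only [← PiLp.toLp_single, ← WithLp.toLp_sum, Finset.univ_sum_single]
  rw [lpNorm_eq_norm, sum_single, lpNorm_one]
  exact (norm_sum_le _ _).trans_eq (by simp only [PiLp.norm_single, Real.norm_eq_abs])

lemma lpNorm_le_card_rpow_mul [Nonempty ι] [Fact (1 ≤ p)] {v : ι → ℝ} {c : ℝ}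
    (h : ∀ i, |v i| ≤ c) : lpNorm p v ≤ (Fintype.card ι : ℝ) ^ (1 / p).toReal * c := by
  have hc : 0 ≤ c := (abs_nonneg _).trans (h (Classical.arbitrary ι))
  calc lpNorm p v ≤ lpNorm p (Function.const ι c) :=
        lpNorm_mono p fun i => (h i).trans (le_abs_self c)
    _ = (Fintype.card ι : ℝ) ^ (1 / p).toReal * c := by
        rw [lpNorm_eq_norm, PiLp.norm_toLp_const', Real.norm_of_nonneg hc]
        simp

lemma lpNorm_one_sub_le_two_of_mem_stdSimplex {u v : ι → ℝ} (hu : u ∈ stdSimplex ℝ ι)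
    (hv : v ∈ stdSimplex ℝ ι) : lpNorm 1 (u - v) ≤ 2 := by
  calc lpNorm 1 (u - v) = ∑ i, |u i - v i| := lpNorm_one _
    _ ≤ ∑ i, (u i + v i) := by
        gcongr with i
        exact abs_le.2 ⟨by linarith [hu.1 i], by linarith [hv.1 i]⟩
    _ = 2 := by rw [Finset.sum_add_distrib, hu.2, hv.2, one_add_one_eq_two]

end LpNorm

section Duality

variable {ι : Type*} [Fintype ι]

lemma dotProduct_le_lpNorm_one_mul_lpNorm_top (u v : ι → ℝ) :
    u ⬝ᵥ v ≤ lpNorm 1 u * lpNorm ∞ v := by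
  rw [lpNorm_one, Finset.sum_mul]
  refine Finset.sum_le_sum fun i _ => (le_abs_self _).trans ?_
  rw [abs_mul]
  exact mul_le_mul_of_nonneg_left (abs_apply_le_lpNorm ∞ v i) (abs_nonneg _)

lemma dotProduct_le_lpNorm_mul_lpNorm (p q : ℝ≥0∞) [p.HolderConjugate q] (u v : ι → ℝ) :
    u ⬝ᵥ v ≤ lpNorm p u * lpNorm q v := by
  rcases eq_or_ne p ∞ with rfl | hp
  · obtain rfl : q = 1 := ENNReal.HolderConjugate.unique ∞ q 1
    rw [dotProduct_comm, mul_comm]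
    exact dotProduct_le_lpNorm_one_mul_lpNorm_top v u
  rcases eq_or_ne q ∞ with rfl | hq
  · obtain rfl : p = 1 := ENNReal.HolderConjugate.unique ∞ p 1
    exact dotProduct_le_lpNorm_one_mul_lpNorm_top u v
  simp only [lpNorm, if_neg hp, if_neg hq]
  exact Real.inner_le_Lp_mul_Lq _ u v (ENNReal.HolderConjugate.toReal_of_ne_top hp hq)

lemma abs_coe_sign_le_one (x : ℝ) : |(SignType.sign x : ℝ)| ≤ 1 := by
  rcases lt_trichotomy x 0 with hx | rfl | hx <;> simp [*]

lemma exists_lpNorm_one_le_one_dotProduct_eq (v : ι → ℝ) :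
    ∃ u : ι → ℝ, lpNorm 1 u ≤ 1 ∧ u ⬝ᵥ v = lpNorm ∞ v := by
  classical
  rcases isEmpty_or_nonempty ι with _ | _
  · exact ⟨0, by simp [lpNorm_one], by simp [lpNorm_top]⟩
  obtain ⟨i, hi⟩ := exists_eq_ciSup_of_finite (f := fun i => |v i|)
  refine ⟨Pi.single i (SignType.sign (v i)), ?_, ?_⟩
  · rw [lpNorm_eq_norm, PiLp.toLp_single, PiLp.norm_single]
    exact abs_coe_sign_le_one (v i)
  · rw [single_dotProduct, sign_mul_self, lpNorm_top, ← hi]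

lemma exists_lpNorm_top_le_one_dotProduct_eq (v : ι → ℝ) :
    ∃ u : ι → ℝ, lpNorm ∞ u ≤ 1 ∧ u ⬝ᵥ v = lpNorm 1 v := by
  refine ⟨fun i => SignType.sign (v i), ?_, ?_⟩
  · rw [lpNorm_top]
    exact Real.iSup_le (fun i => abs_coe_sign_le_one (v i)) zero_le_one
  · simp only [dotProduct, sign_mul_self, lpNorm_one]

lemma exists_lpNorm_le_one_dotProduct_eq_of_ne_top {p q : ℝ≥0∞} [p.HolderConjugate q]
    (hp : p ≠ ∞) (hq : q ≠ ∞) (v : ι → ℝ) :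
    ∃ u : ι → ℝ, lpNorm p u ≤ 1 ∧ u ⬝ᵥ v = lpNorm q v := by
  have hpq : p.toReal.HolderConjugate q.toReal :=
    ENNReal.HolderConjugate.toReal_of_ne_top hp hq
  obtain ⟨g, hg, hgv⟩ :=
    (NNReal.isGreatest_Lp Finset.univ (fun i => Real.nnabs (v i)) hpq.symm).1
  refine ⟨fun i => SignType.sign (v i) * g i, ?_, ?_⟩
  · have hg_norm : lpNorm p (fun i => (g i : ℝ)) ≤ 1 := by
      simp only [lpNorm, if_neg hp, NNReal.abs_eq]
      exact Real.rpow_le_one (by positivity) (mod_cast hg) (by positivity)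
    refine (lpNorm_mono p fun i => ?_).trans hg_norm
    rw [abs_mul]
    exact mul_le_of_le_one_left (abs_nonneg _) (abs_coe_sign_le_one (v i))
  · have hgv_real := congrArg NNReal.toReal hgv
    push_cast [Real.coe_nnabs] at hgv_real
    simp only [lpNorm, if_neg hq, ← hgv_real, dotProduct]
    exact Finset.sum_congr rfl fun i _ => by rw [← sign_mul_self (v i)]; ring

lemma exists_lpNorm_le_one_dotProduct_eq (p q : ℝ≥0∞) [p.HolderConjugate q] (v : ι → ℝ) :
    ∃ u : ι → ℝ, lpNorm p u ≤ 1 ∧ u ⬝ᵥ v = lpNorm q v := by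
  rcases eq_or_ne p ∞ with rfl | hp
  · obtain rfl : q = 1 := ENNReal.HolderConjugate.unique ∞ q 1
    exact exists_lpNorm_top_le_one_dotProduct_eq v
  rcases eq_or_ne q ∞ with rfl | hq
  · obtain rfl : p = 1 := ENNReal.HolderConjugate.unique ∞ p 1
    exact exists_lpNorm_one_le_one_dotProduct_eq v
  exact exists_lpNorm_le_one_dotProduct_eq_of_ne_top hp hq v

end Duality

section MixedNorm

variable {ι κ : Type*} [Fintype ι] [Fintype κ]

lemma mixedNorm_nonneg (p q : ℝ≥0∞) (A : Matrix ι κ ℝ) : 0 ≤ mixedNorm p q A :=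
  lpNorm_nonneg p _

lemma mixedNorm_one (q : ℝ≥0∞) (A : Matrix ι κ ℝ) : mixedNorm 1 q A = ∑ i, lpNorm q (A i) := by
  simp only [mixedNorm, lpNorm_one, abs_of_nonneg (lpNorm_nonneg q _)]

lemma mixedNorm_mono (p q : ℝ≥0∞) {A B : Matrix ι κ ℝ} (h : ∀ i j, |A i j| ≤ |B i j|) :
    mixedNorm p q A ≤ mixedNorm p q B :=
  lpNorm_mono p fun i => abs_le_abs_of_nonneg (lpNorm_nonneg q _) (lpNorm_mono q (h i))

lemma mixedNorm_eq_norm (p q : ℝ≥0∞) [Fact (1 ≤ p)] [Fact (1 ≤ q)] (A : Matrix ι κ ℝ) :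
    mixedNorm p q A = ‖WithLp.toLp p fun i => WithLp.toLp q (A i)‖ := by
  simp only [mixedNorm, lpNorm_eq_norm q, lpNorm_norm]

lemma mixedNorm_sub_le (p q : ℝ≥0∞) [Fact (1 ≤ p)] [Fact (1 ≤ q)] (A B : Matrix ι κ ℝ) :
    mixedNorm p q (A - B) ≤ mixedNorm p q A + mixedNorm p q B := by
  simp only [mixedNorm_eq_norm]
  exact norm_sub_le (E := PiLp p fun _ : ι => PiLp q fun _ : κ => ℝ)
    (WithLp.toLp p fun i => WithLp.toLp q (A i)) (WithLp.toLp p fun i => WithLp.toLp q (B i))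

lemma abs_apply_le_mixedNorm (p q : ℝ≥0∞) [Fact (1 ≤ p)] [Fact (1 ≤ q)]
    (A : Matrix ι κ ℝ) (i : ι) (j : κ) : |A i j| ≤ mixedNorm p q A :=
  calc |A i j| ≤ lpNorm q (A i) := abs_apply_le_lpNorm q (A i) j
    _ ≤ |lpNorm q (A i)| := le_abs_self _
    _ ≤ mixedNorm p q A := abs_apply_le_lpNorm p (fun i => lpNorm q (A i)) i

lemma mixedNorm_vecMulVec (p q : ℝ≥0∞) [Fact (1 ≤ p)] [Fact (1 ≤ q)] (u : ι → ℝ) (v : κ → ℝ) :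
    mixedNorm p q (vecMulVec u v) = lpNorm p u * lpNorm q v :=
  calc mixedNorm p q (vecMulVec u v) = lpNorm p (lpNorm q v • fun i => |u i|) := by
        unfold mixedNorm
        congr 1 with i
        change lpNorm q (u i • v) = lpNorm q v * |u i|
        rw [lpNorm_smul, mul_comm]
    _ = lpNorm p u * lpNorm q v := by
        rw [lpNorm_smul, lpNorm_abs, abs_of_nonneg (lpNorm_nonneg q v), mul_comm]

lemma mixedNorm_le_card_rpow_mul [Nonempty ι] (p q : ℝ≥0∞) [Fact (1 ≤ p)] {A : Matrix ι κ ℝ}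
    {c : ℝ} (h : ∀ i, lpNorm q (A i) ≤ c) :
    mixedNorm p q A ≤ (Fintype.card ι : ℝ) ^ (1 / p).toReal * c :=
  lpNorm_le_card_rpow_mul p fun i => by simpa only [abs_of_nonneg (lpNorm_nonneg q _)] using h i

variable (p₁ p₂ q₁ q₂ : ℝ≥0∞) [p₁.HolderConjugate q₁] [p₂.HolderConjugate q₂]

lemma trace_mul_transpose_le_mixedNorm_mul_mixedNorm (A B : Matrix ι κ ℝ) :
    trace (A * Bᵀ) ≤ mixedNorm p₁ p₂ A * mixedNorm q₁ q₂ B :=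
  calc trace (A * Bᵀ) = ∑ i, A i ⬝ᵥ B i := rfl
    _ ≤ ∑ i, lpNorm p₂ (A i) * lpNorm q₂ (B i) :=
        Finset.sum_le_sum fun i _ => dotProduct_le_lpNorm_mul_lpNorm p₂ q₂ (A i) (B i)
    _ ≤ mixedNorm p₁ p₂ A * mixedNorm q₁ q₂ B := dotProduct_le_lpNorm_mul_lpNorm p₁ q₁ _ _

lemma exists_mixedNorm_le_one_trace_eq (A : Matrix ι κ ℝ) :
    ∃ U : Matrix ι κ ℝ, mixedNorm p₁ p₂ U ≤ 1 ∧ trace (U * Aᵀ) = mixedNorm q₁ q₂ A := by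
  have : Fact (1 ≤ p₂) := ⟨ENNReal.HolderConjugate.one_le p₂ q₂⟩
  choose u hu huA using fun i => exists_lpNorm_le_one_dotProduct_eq p₂ q₂ (A i)
  obtain ⟨w, hw, hwA⟩ := exists_lpNorm_le_one_dotProduct_eq p₁ q₁ fun i => lpNorm q₂ (A i)
  refine ⟨of fun i => w i • u i, ?_, ?_⟩
  · refine (lpNorm_mono p₁ fun i => ?_).trans hw
    rw [abs_of_nonneg (lpNorm_nonneg p₂ _)]
    calc lpNorm p₂ (w i • u i) = |w i| * lpNorm p₂ (u i) := lpNorm_smul p₂ _ _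
      _ ≤ |w i| := mul_le_of_le_one_right (abs_nonneg _) (hu i)
  · calc trace (of (fun i => w i • u i) * Aᵀ) = ∑ i, (w i • u i) ⬝ᵥ A i := rfl
      _ = ∑ i, w i * lpNorm q₂ (A i) := by simp only [smul_dotProduct, huA, smul_eq_mul]
      _ = mixedNorm q₁ q₂ A := hwA

end MixedNorm

section MixedOpNorm

variable {ι κ : Type*} (σ : Type*) [Fintype ι] [Fintype κ] [Fintype σ]

/-- The norm of the operator `U ↦ X * U` on matrices with columns indexed by `σ`, from the mixed
norm `p₁ × p₂` to the mixed norm `r₁ × r₂`. The constant `L` of the theorem is this norm divided by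
the number of rows of `X`. -/
noncomputable def mixedOpNorm (p₁ p₂ r₁ r₂ : ℝ≥0∞) (X : Matrix ι κ ℝ) : ℝ :=
  sSup {r : ℝ | ∃ U : Matrix κ σ ℝ, mixedNorm p₁ p₂ U ≤ 1 ∧ r = mixedNorm r₁ r₂ (X * U)}

lemma mixedOpNorm_nonneg (p₁ p₂ r₁ r₂ : ℝ≥0∞) (X : Matrix ι κ ℝ) :
    0 ≤ mixedOpNorm σ p₁ p₂ r₁ r₂ X := by
  refine Real.sSup_nonneg ?_
  rintro _ ⟨U, -, rfl⟩
  exact mixedNorm_nonneg r₁ r₂ _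

variable {σ}

lemma mixedNorm_mul_le_mixedOpNorm {p₁ p₂ : ℝ≥0∞} [Fact (1 ≤ p₁)] [Fact (1 ≤ p₂)] (r₁ r₂ : ℝ≥0∞)
    (X : Matrix ι κ ℝ) {U : Matrix κ σ ℝ} (hU : mixedNorm p₁ p₂ U ≤ 1) :
    mixedNorm r₁ r₂ (X * U) ≤ mixedOpNorm σ p₁ p₂ r₁ r₂ X := by
  refine le_csSup ⟨mixedNorm r₁ r₂ (of fun i (_ : σ) => ∑ l, |X i l|), ?_⟩ ⟨U, hU, rfl⟩
  rintro _ ⟨W, hW, rfl⟩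
  refine mixedNorm_mono r₁ r₂ fun i j => ?_
  calc |(X * W) i j| ≤ ∑ l, |X i l * W l j| := Finset.abs_sum_le_sum_abs _ _
    _ ≤ ∑ l, |X i l| := by
        refine Finset.sum_le_sum fun l _ => ?_
        rw [abs_mul]
        exact mul_le_of_le_one_right (abs_nonneg _) ((abs_apply_le_mixedNorm p₁ p₂ W l j).trans hW)
    _ ≤ abs (∑ l, |X i l|) := le_abs_self _

lemma mixedNorm_transpose_mul_le (p₁ p₂ q₁ q₂ r₁ r₂ s₁ s₂ : ℝ≥0∞) [p₁.HolderConjugate q₁]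
    [p₂.HolderConjugate q₂] [r₁.HolderConjugate s₁] [r₂.HolderConjugate s₂]
    (X : Matrix ι κ ℝ) (D : Matrix ι σ ℝ) :
    mixedNorm q₁ q₂ (Xᵀ * D) ≤ mixedOpNorm σ p₁ p₂ s₁ s₂ X * mixedNorm r₁ r₂ D := by
  have : Fact (1 ≤ p₁) := ⟨ENNReal.HolderConjugate.one_le p₁ q₁⟩
  have : Fact (1 ≤ p₂) := ⟨ENNReal.HolderConjugate.one_le p₂ q₂⟩
  have : s₁.HolderConjugate r₁ := .symm
  have : s₂.HolderConjugate r₂ := .symm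
  obtain ⟨U, hU, hUX⟩ := exists_mixedNorm_le_one_trace_eq p₁ p₂ q₁ q₂ (Xᵀ * D)
  calc mixedNorm q₁ q₂ (Xᵀ * D) = trace (U * (Xᵀ * D)ᵀ) := hUX.symm
    _ = trace (X * U * Dᵀ) := by
        rw [transpose_mul, transpose_transpose, ← Matrix.mul_assoc, trace_mul_comm,
          Matrix.mul_assoc]
    _ ≤ mixedNorm s₁ s₂ (X * U) * mixedNorm r₁ r₂ D :=
        trace_mul_transpose_le_mixedNorm_mul_mixedNorm s₁ s₂ r₁ r₂ _ _
    _ ≤ mixedOpNorm σ p₁ p₂ s₁ s₂ X * mixedNorm r₁ r₂ D :=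
        mul_le_mul_of_nonneg_right (mixedNorm_mul_le_mixedOpNorm s₁ s₂ X hU)
          (mixedNorm_nonneg r₁ r₂ D)

end MixedOpNorm

section Sampling

variable {ι : Type*} [Fintype ι]

/-- The vector proportional to `d` with entries summing to one; for the row weights `d` this is the
optimal sampling distribution `q*`. It is the zero vector when `∑ i, d i = 0`. -/
noncomputable def normalizedWeights (d : ι → ℝ) : ι → ℝ := fun i => d i / ∑ j, d j

lemma sum_normalizedWeights {d : ι → ℝ} (hd : ∑ i, d i ≠ 0) : ∑ i, normalizedWeights d i = 1 := by
  simp only [normalizedWeights, ← Finset.sum_div, div_self hd]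

lemma sq_sum_le_sum_one_div_mul_sq {q : ι → ℝ} (hq : ∀ i, 0 < q i) (hq_sum : ∑ i, q i = 1)
    (d : ι → ℝ) : (∑ i, d i) ^ 2 ≤ ∑ i, (1 / q i) * d i ^ 2 := by
  simpa only [hq_sum, div_one, one_div_mul_eq_div] using
    Finset.sq_sum_div_le_sum_sq_div Finset.univ d fun i _ => hq i

lemma sum_one_div_normalizedWeights_mul_sq (d : ι → ℝ) :
    ∑ i, (1 / normalizedWeights d i) * d i ^ 2 = (∑ i, d i) ^ 2 := by
  rw [sq, Finset.mul_sum]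
  refine Finset.sum_congr rfl fun i _ => ?_
  rcases eq_or_ne (d i) 0 with hi | hi
  · simp [hi]
  · rw [normalizedWeights, one_div_div]
    field_simp

lemma sum_mul_sq_mixedNorm_sub_le {κ σ : Type*} [Fintype κ] [Fintype σ] (p₁ p₂ : ℝ≥0∞)
    [Fact (1 ≤ p₁)] [Fact (1 ≤ p₂)] {q : ι → ℝ} (hq : ∀ i, 0 ≤ q i) (hq_sum : ∑ i, q i = 1)
    (A : Matrix κ σ ℝ) (B : ι → Matrix κ σ ℝ) :
    ∑ i, q i * mixedNorm p₁ p₂ (A - B i) ^ 2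
      ≤ 2 * (mixedNorm p₁ p₂ A ^ 2 + ∑ i, q i * mixedNorm p₁ p₂ (B i) ^ 2) := by
  have sq_sub_le (i : ι) : mixedNorm p₁ p₂ (A - B i) ^ 2
      ≤ 2 * (mixedNorm p₁ p₂ A ^ 2 + mixedNorm p₁ p₂ (B i) ^ 2) :=
    (pow_le_pow_left₀ (mixedNorm_nonneg _ _ _) (mixedNorm_sub_le p₁ p₂ A (B i)) 2).trans add_sq_le
  calc ∑ i, q i * mixedNorm p₁ p₂ (A - B i) ^ 2
      ≤ ∑ i, q i * (2 * (mixedNorm p₁ p₂ A ^ 2 + mixedNorm p₁ p₂ (B i) ^ 2)) :=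
        Finset.sum_le_sum fun i _ => mul_le_mul_of_nonneg_left (sq_sub_le i) (hq i)
    _ = 2 * ((∑ i, q i) * mixedNorm p₁ p₂ A ^ 2 + ∑ i, q i * mixedNorm p₁ p₂ (B i) ^ 2) := by
        rw [Finset.sum_mul, ← Finset.sum_add_distrib, Finset.mul_sum]
        exact Finset.sum_congr rfl fun i _ => by ring
    _ = 2 * (mixedNorm p₁ p₂ A ^ 2 + ∑ i, q i * mixedNorm p₁ p₂ (B i) ^ 2) := by
        rw [hq_sum, one_mul]

/-- The weights `d_j = ‖X(j,:)‖_{q₁} ‖D(j,:)‖_{q₂}`, which determine the optimal sampling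
distribution; in the theorem `D = V - Y`. -/
noncomputable def rowWeight {κ σ : Type*} [Fintype κ] [Fintype σ] (q₁ q₂ : ℝ≥0∞)
    (X : Matrix ι κ ℝ) (D : Matrix ι σ ℝ) (j : ι) : ℝ :=
  lpNorm q₁ (X j) * lpNorm q₂ (D j)

lemma sum_rowWeight_le {κ σ : Type*} [Fintype κ] [Fintype σ] (q₁ q₂ : ℝ≥0∞) (X : Matrix ι κ ℝ)
    {D : Matrix ι σ ℝ} {δ : ℝ} (hD : ∀ j, lpNorm q₂ (D j) ≤ δ) :
    ∑ j, rowWeight q₁ q₂ X D j ≤ mixedNorm 1 q₁ X * δ := by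
  rw [mixedNorm_one, Finset.sum_mul]
  exact Finset.sum_le_sum fun j _ => mul_le_mul_of_nonneg_left (hD j) (lpNorm_nonneg q₁ _)

end Sampling

section PartialSampling

variable {n m k : ℕ} (X : Matrix (Fin n) (Fin m) ℝ) (V Y : Matrix (Fin n) (Fin k) ℝ)

lemma etaPart_eq_vecMulVec (q : Fin n → ℝ) (j : Fin n) :
    etaPart X V Y q j = vecMulVec (X j) ((q j)⁻¹ • (V - Y) j) := by
  ext r c
  simp only [etaPart, of_apply, vecMulVec_apply, Pi.smul_apply, Matrix.sub_apply, smul_eq_mul]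
  ring

lemma sum_mul_sq_mixedNorm_etaPart (q₁ q₂ : ℝ≥0∞) [Fact (1 ≤ q₁)] [Fact (1 ≤ q₂)]
    (q : Fin n → ℝ) :
    ∑ j, q j * mixedNorm q₁ q₂ (etaPart X V Y q j) ^ 2
      = ∑ j, (1 / q j) * rowWeight q₁ q₂ X (V - Y) j ^ 2 := by
  refine Finset.sum_congr rfl fun j _ => ?_
  rw [etaPart_eq_vecMulVec, mixedNorm_vecMulVec, lpNorm_smul, mul_left_comm, mul_pow, sq_abs,
    ← mul_assoc, rowWeight]
  congr 1
  rcases eq_or_ne (q j) 0 with hj | hj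
  · simp [hj]
  · field_simp

lemma sum_normalizedWeights_mul_sq_mixedNorm_etaPart (q₁ q₂ : ℝ≥0∞) [Fact (1 ≤ q₁)]
    [Fact (1 ≤ q₂)] :
    ∑ j, normalizedWeights (rowWeight q₁ q₂ X (V - Y)) j *
        mixedNorm q₁ q₂ (etaPart X V Y (normalizedWeights (rowWeight q₁ q₂ X (V - Y))) j) ^ 2
      = (∑ j, rowWeight q₁ q₂ X (V - Y) j) ^ 2 := by
  rw [sum_mul_sq_mixedNorm_etaPart, sum_one_div_normalizedWeights_mul_sq]

variable {X V Y}

lemma sum_normalizedWeights_mul_sq_mixedNorm_sub_etaPart_le (hn : 0 < n)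
    (p₁ p₂ q₁ q₂ r₁ r₂ s₁ s₂ : ℝ≥0∞) [p₁.HolderConjugate q₁] [p₂.HolderConjugate q₂]
    [r₁.HolderConjugate s₁] [r₂.HolderConjugate s₂]
    (hd : ∀ j, 0 < rowWeight q₁ q₂ X (V - Y) j) {δ : ℝ}
    (hδ : ∀ j, lpNorm 1 ((V - Y) j) ≤ δ) :
    ∑ j, normalizedWeights (rowWeight q₁ q₂ X (V - Y)) j * mixedNorm q₁ q₂ (Xᵀ * (V - Y) -
        etaPart X V Y (normalizedWeights (rowWeight q₁ q₂ X (V - Y))) j) ^ 2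
      ≤ 2 * δ ^ 2 * (((n : ℝ) ^ (1 / r₁).toReal * mixedOpNorm (Fin k) p₁ p₂ s₁ s₂ X) ^ 2
        + mixedNorm 1 q₁ X ^ 2) := by
  have : NeZero n := ⟨hn.ne'⟩
  have : Fact (1 ≤ q₁) := ⟨ENNReal.HolderConjugate.one_le q₁ p₁⟩
  have : Fact (1 ≤ q₂) := ⟨ENNReal.HolderConjugate.one_le q₂ p₂⟩
  have : Fact (1 ≤ r₁) := ⟨ENNReal.HolderConjugate.one_le r₁ s₁⟩
  have : Fact (1 ≤ r₂) := ⟨ENNReal.HolderConjugate.one_le r₂ s₂⟩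
  have sum_pos : 0 < ∑ j, rowWeight q₁ q₂ X (V - Y) j :=
    Finset.sum_pos (fun j _ => hd j) Finset.univ_nonempty
  have weights_nonneg (j : Fin n) : 0 ≤ normalizedWeights (rowWeight q₁ q₂ X (V - Y)) j :=
    (div_pos (hd j) sum_pos).le
  have sum_le : ∑ j, rowWeight q₁ q₂ X (V - Y) j ≤ mixedNorm 1 q₁ X * δ :=
    sum_rowWeight_le q₁ q₂ X fun j => (lpNorm_le_lpNorm_one q₂ _).trans (hδ j)
  have diff_le : mixedNorm r₁ r₂ (V - Y) ≤ (n : ℝ) ^ (1 / r₁).toReal * δ := by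
    simpa only [Fintype.card_fin] using
      mixedNorm_le_card_rpow_mul r₁ r₂ fun j => (lpNorm_le_lpNorm_one r₂ _).trans (hδ j)
  have mean_le : mixedNorm q₁ q₂ (Xᵀ * (V - Y))
      ≤ mixedOpNorm (Fin k) p₁ p₂ s₁ s₂ X * ((n : ℝ) ^ (1 / r₁).toReal * δ) :=
    (mixedNorm_transpose_mul_le p₁ p₂ q₁ q₂ r₁ r₂ s₁ s₂ X (V - Y)).trans
      (mul_le_mul_of_nonneg_left diff_le (mixedOpNorm_nonneg _ _ _ _ _ X))
  refine (sum_mul_sq_mixedNorm_sub_le q₁ q₂ weights_nonneg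
    (sum_normalizedWeights sum_pos.ne') _ _).trans ?_
  rw [sum_normalizedWeights_mul_sq_mixedNorm_etaPart]
  calc 2 * (mixedNorm q₁ q₂ (Xᵀ * (V - Y)) ^ 2 + (∑ j, rowWeight q₁ q₂ X (V - Y) j) ^ 2)
      ≤ 2 * ((mixedOpNorm (Fin k) p₁ p₂ s₁ s₂ X * ((n : ℝ) ^ (1 / r₁).toReal * δ)) ^ 2
          + (mixedNorm 1 q₁ X * δ) ^ 2) := by
        have := mixedNorm_nonneg q₁ q₂ (Xᵀ * (V - Y))
        gcongr
    _ = _ := by ring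

end PartialSampling

lemma sq_rpow_one_div_toReal_mul_le {p : ℝ≥0∞} (hp : 2 ≤ p) {x : ℝ} (hx : 1 ≤ x) (c : ℝ) :
    (x ^ (1 / p).toReal * c) ^ 2 ≤ x * c ^ 2 := by
  have exponent_le : (1 / p).toReal * 2 ≤ 1 := by
    have : (1 / p).toReal ≤ (1 / 2 : ℝ≥0∞).toReal :=
      ENNReal.toReal_mono (by simp) (ENNReal.div_le_div_left hp 1)
    norm_num at this ⊢
    linarith
  calc (x ^ (1 / p).toReal * c) ^ 2 = x ^ ((1 / p).toReal * 2) * c ^ 2 := by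
        rw [mul_pow, ← Real.rpow_mul_natCast (zero_le_one.trans hx), Nat.cast_ofNat]
    _ ≤ x ^ (1 : ℝ) * c ^ 2 := by gcongr
    _ = x * c ^ 2 := by rw [Real.rpow_one]

theorem partial_sampling_dual_general_norms_general {n m k : ℕ} (hn : 0 < n)
    (Xh : Matrix (Fin n) (Fin m) ℝ) {pU₁ pU₂ pV₁ pV₂ qU₁ qU₂ qV₁ qV₂ : ℝ≥0∞}
    (hcU₁ : 1 / pU₁ + 1 / qU₁ = 1) (hcU₂ : 1 / pU₂ + 1 / qU₂ = 1)
    (hcV₁ : 1 / pV₁ + 1 / qV₁ = 1) (hcV₂ : 1 / pV₂ + 1 / qV₂ = 1)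
    {L : ℝ} (hL : L = mixedOpNorm (Fin k) pU₁ pU₂ qV₁ qV₂ Xh / n)
    (V Y : Matrix (Fin n) (Fin k) ℝ) {d qOpt : Fin n → ℝ}
    (hd : d = rowWeight qU₁ qU₂ Xh (V - Y)) (hqOpt : qOpt = normalizedWeights d) :
    (∀ q : Fin n → ℝ, (∀ j, 0 < q j) → ∑ j, q j = 1 →
      ∑ j, q j * mixedNorm qU₁ qU₂ (etaPart Xh V Y q j) ^ 2 = ∑ j, (1 / q j) * d j ^ 2 ∧
      (∑ j, d j) ^ 2 ≤ ∑ j, q j * mixedNorm qU₁ qU₂ (etaPart Xh V Y q j) ^ 2) ∧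
    ((∀ j, 0 < d j) →
      ∑ j, qOpt j * mixedNorm qU₁ qU₂ (etaPart Xh V Y qOpt j) ^ 2 = (∑ j, d j) ^ 2 ∧
      ∀ δ : ℝ, (∀ j, lpNorm 1 ((V - Y) j) ≤ δ) →
        1 / (n : ℝ) ^ 2 *
            ∑ j, qOpt j * mixedNorm qU₁ qU₂ (Xhᵀ * (V - Y) - etaPart Xh V Y qOpt j) ^ 2
          ≤ 2 * δ ^ 2 * (((n : ℝ) ^ (1 / pV₁).toReal * L) ^ 2
            + (mixedNorm 1 qU₁ Xh / n) ^ 2)) := by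
  have : pU₁.HolderConjugate qU₁ := ENNReal.holderConjugate_iff.2 (by simpa using hcU₁)
  have : pU₂.HolderConjugate qU₂ := ENNReal.holderConjugate_iff.2 (by simpa using hcU₂)
  have : pV₁.HolderConjugate qV₁ := ENNReal.holderConjugate_iff.2 (by simpa using hcV₁)
  have : pV₂.HolderConjugate qV₂ := ENNReal.holderConjugate_iff.2 (by simpa using hcV₂)
  have : Fact (1 ≤ qU₁) := ⟨ENNReal.HolderConjugate.one_le qU₁ pU₁⟩
  have : Fact (1 ≤ qU₂) := ⟨ENNReal.HolderConjugate.one_le qU₂ pU₂⟩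
  subst hd hqOpt hL
  refine ⟨fun q hq hq_sum => ?_, fun hd => ⟨?_, fun δ hδ => ?_⟩⟩
  · rw [sum_mul_sq_mixedNorm_etaPart]
    exact ⟨rfl, sq_sum_le_sum_one_div_mul_sq hq hq_sum _⟩
  · exact sum_normalizedWeights_mul_sq_mixedNorm_etaPart Xh V Y qU₁ qU₂
  · grw [sum_normalizedWeights_mul_sq_mixedNorm_sub_etaPart_le hn pU₁ pU₂ qU₁ qU₂ pV₁ pV₂
      qV₁ qV₂ hd hδ]
    exact le_of_eq (by ring)

/-- Extended Proposition "th:variance-partial-general", dual part: for general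
mixed norms, the optimal sampling distribution and the variance proxy bound
(assuming `p_V¹ ≥ 2`). -/
theorem partial_sampling_dual_general_norms
    (n m k : ℕ) (hn : 0 < n) (hm : 0 < m) (hk : 0 < k)
    (Xh : Matrix (Fin n) (Fin m) ℝ)
    (pU₁ pU₂ pV₁ pV₂ qU₁ qU₂ qV₁ qV₂ : ℝ≥0∞)
    (hpU₁ : 1 ≤ pU₁) (hpU₂ : 1 ≤ pU₂) (hpV₁ : 1 ≤ pV₁) (hpV₂ : 1 ≤ pV₂)
    (hcU₁ : 1 / pU₁ + 1 / qU₁ = 1) (hcU₂ : 1 / pU₂ + 1 / qU₂ = 1)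
    (hcV₁ : 1 / pV₁ + 1 / qV₁ = 1) (hcV₂ : 1 / pV₂ + 1 / qV₂ = 1)
    (L : ℝ)
    (hL : L = sSup {r : ℝ | ∃ U : Matrix (Fin m) (Fin k) ℝ,
        mixedNorm pU₁ pU₂ U ≤ 1 ∧ r = mixedNorm qV₁ qV₂ (Xh * U)} / n) :
    -- (i) optimal distribution and second moment
    (∀ V Y : Matrix (Fin n) (Fin k) ℝ,
      (∀ j, V j ∈ stdSimplex ℝ (Fin k)) → (∀ j, Y j ∈ stdSimplex ℝ (Fin k)) →
      (∀ j, 0 < lpNorm qU₁ (Xh j) * lpNorm qU₂ (fun l => V j l - Y j l)) →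
      (∀ q : Fin n → ℝ, (∀ j, 0 < q j) → (∑ j, q j) = 1 →
        ((∑ j, q j * (mixedNorm qU₁ qU₂ (etaPart Xh V Y q j)) ^ 2)
            = ∑ j, (1 / q j) * (lpNorm qU₁ (Xh j) * lpNorm qU₂ (fun l => V j l - Y j l)) ^ 2) ∧
        (∑ j, lpNorm qU₁ (Xh j) * lpNorm qU₂ (fun l => V j l - Y j l)) ^ 2
          ≤ ∑ j, q j * (mixedNorm qU₁ qU₂ (etaPart Xh V Y q j)) ^ 2) ∧
      (∑ j, (lpNorm qU₁ (Xh j) * lpNorm qU₂ (fun l => V j l - Y j l) /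
              ∑ j', lpNorm qU₁ (Xh j') * lpNorm qU₂ (fun l => V j' l - Y j' l)) *
          (mixedNorm qU₁ qU₂ (etaPart Xh V Y
            (fun j' => lpNorm qU₁ (Xh j') * lpNorm qU₂ (fun l => V j' l - Y j' l) /
              ∑ j'', lpNorm qU₁ (Xh j'') * lpNorm qU₂ (fun l => V j'' l - Y j'' l)) j)) ^ 2)
        = (∑ j, lpNorm qU₁ (Xh j) * lpNorm qU₂ (fun l => V j l - Y j l)) ^ 2) ∧
    -- (ii) variance proxy bound under `p_V¹ ≥ 2`
    ((2 : ℝ≥0∞) ≤ pV₁ →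
      ∀ V Y : Matrix (Fin n) (Fin k) ℝ,
      (∀ j, V j ∈ stdSimplex ℝ (Fin k)) → (∀ j, Y j ∈ stdSimplex ℝ (Fin k)) →
      (∀ j, 0 < lpNorm qU₁ (Xh j) * lpNorm qU₂ (fun l => V j l - Y j l)) →
      (1 / (n : ℝ) ^ 2) *
        (∑ j, (lpNorm qU₁ (Xh j) * lpNorm qU₂ (fun l => V j l - Y j l) /
                ∑ j', lpNorm qU₁ (Xh j') * lpNorm qU₂ (fun l => V j' l - Y j' l)) *
          (mixedNorm qU₁ qU₂ (Xhᵀ * (V - Y) - etaPart Xh V Y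
            (fun j' => lpNorm qU₁ (Xh j') * lpNorm qU₂ (fun l => V j' l - Y j' l) /
              ∑ j'', lpNorm qU₁ (Xh j'') * lpNorm qU₂ (fun l => V j'' l - Y j'' l)) j)) ^ 2)
        ≤ 8 * n * L ^ 2 + (8 / (n : ℝ) ^ 2) * (mixedNorm 1 qU₁ Xh) ^ 2) := by
  have general (V Y : Matrix (Fin n) (Fin k) ℝ) :=
    partial_sampling_dual_general_norms_general hn Xh hcU₁ hcU₂ hcV₁ hcV₂ hL V Y rfl rfl
  refine ⟨fun V Y _ _ hd => ⟨(general V Y).1, ((general V Y).2 hd).1⟩, fun hp V Y hV hY hd =>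
    (((general V Y).2 hd).2 2 fun j =>
      lpNorm_one_sub_le_two_of_mem_stdSimplex (hV j) (hY j)).trans ?_⟩
  grw [sq_rpow_one_div_toReal_mul_le hp (mod_cast hn)]
  exact le_of_eq (by ring)
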